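/- arXiv:2502.02033 — 5 statements merged into one kernel-verified Lean document; each statement's English description precedes it below -/
import Mathlib

section
/- Let G be a finite abelian group of even order, let G_1 be a subgroup of G of index two, and let G_2 be the nontrivial coset of G_1 in G. Let n be an even integer with n ≥ |G|/2 + 1 and set k = n/2. Suppose A is a set of n pairwise distinct elements of G, g ∈ G_1 with g ∉ A, the elements of A sum to 2g, and n_2 := |A ∩ G_2| ≤ k − 3. Then there exists a subset B ⊆ A with |B| = k whose elements sum to g. -/
open Classical in
theorem aux_three {K : Type*} [AddCommGroup K] [Fintype K] (S : Finset K)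
    (hS : Fintype.card K + 4 ≤ 2 * S.card) (t : K) :
    ∃ T ⊆ S, T.card = 3 ∧ ∑ x ∈ T, x = t := by
  have key : ∃ c ∈ S, ∃ x0 : K, ∀ x, x + x = t - c → x = x0 := by
    let f : K →+ K := nsmulAddMonoidHom 2
    have hf : ∀ x, f x = x + x := fun x => by simp [f, two_nsmul]
    by_cases hsurj : Function.Surjective f
    · have hinj : Function.Injective f := Finite.injective_iff_surjective.mpr hsurj
      have hne : S.Nonempty := by
        rw [← Finset.card_pos]; omega
      obtain ⟨c, hc⟩ := hne
      obtain ⟨x0, hx0⟩ := hsurj (t - c)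
      refine ⟨c, hc, x0, fun x hx => hinj ?_⟩
      rw [hx0, hf, hx]
    · have hr : f.range ≠ ⊤ := fun h => hsurj (AddMonoidHom.range_eq_top.mp h)
      have h1 : f.range.index ≠ 1 := fun h => hr (AddSubgroup.index_eq_one.mp h)
      have h0 : f.range.index ≠ 0 := AddSubgroup.index_ne_zero_of_finite
      have hmul := f.range.card_mul_index
      rw [Nat.card_eq_fintype_card (α := K)] at hmul
      have h2 : Nat.card f.range * 2 ≤ Fintype.card K := by
        rw [← hmul]; exact Nat.mul_le_mul_left _ (by omega)
      have : ∃ c ∈ S, t - c ∉ f.range := by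
        by_contra! hcon
        have hle : S.card ≤ (Finset.univ.filter (fun x => x ∈ f.range)).card := by
          apply Finset.card_le_card_of_injOn (fun c => t - c)
          · intro c hc
            simpa using hcon c hc
          · intro a _ b _ hab
            simpa using hab
        have he : (Finset.univ.filter (fun x => x ∈ f.range)).card = Nat.card f.range := by
          rw [Nat.card_eq_fintype_card]
          exact (Fintype.card_subtype _).symm
        omega
      obtain ⟨c, hc, hn⟩ := this
      refine ⟨c, hc, 0, fun x hx => absurd ⟨x, ?_⟩ hn⟩
      rw [hf, hx]
  obtain ⟨c, hc, x0, hx0⟩ := key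
  let S' := S.image (fun x => t - c - x)
  have hS' : S'.card = S.card :=
    Finset.card_image_of_injective _ (fun a b hab => by simpa using hab)
  have hR := Finset.card_union_add_card_inter S S'
  have hU : (S ∪ S').card ≤ Fintype.card K := Finset.card_le_univ _
  have hlt : ({c, t - c - c, x0} : Finset K).card < (S ∩ S').card := by
    have := Finset.card_le_three (a := c) (b := t - c - c) (c := x0)
    omega
  obtain ⟨a, ha, han⟩ := Finset.exists_mem_notMem_of_card_lt_card hlt
  simp only [Finset.mem_insert, Finset.mem_singleton, not_or] at han
  obtain ⟨n1, n2, n3⟩ := han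
  rw [Finset.mem_inter] at ha
  obtain ⟨haS, haS'⟩ := ha
  obtain ⟨b, hb, hab⟩ := Finset.mem_image.mp haS'
  have hba : a ≠ b := by
    rintro rfl
    apply n3
    apply hx0
    nth_rewrite 1 [← hab]
    abel
  have hbc : b ≠ c := by
    rintro rfl
    exact n2 hab.symm
  refine ⟨{a, b, c}, ?_, Finset.card_eq_three.mpr ⟨a, b, c, hba, n1, hbc, rfl⟩, ?_⟩
  · intro x hx
    simp only [Finset.mem_insert, Finset.mem_singleton] at hx
    rcases hx with rfl | rfl | rfl <;> assumption
  · rw [Finset.sum_insert (by simp [hba, n1]), Finset.sum_insert (by simp [hbc]),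
      Finset.sum_singleton, ← hab]
    abel

/-- Case I in the proof of Lemma 3.1: `G` a finite abelian group of even order, `G₁` an
index-two subgroup with nontrivial coset `G₂`, `n` even with `n ≥ |G|/2 + 1`, `k = n/2`,
`A` a set of `n` pairwise distinct elements of `G` summing to `2g`, `g ∈ G₁`, `g ∉ A`,
and `n₂ = |A ∩ G₂| ≤ k - 3`. Then `g` is a sum of `k` pairwise distinct elements of `A`. -/
theorem iso_dual_max_length_case_I {G : Type*} [AddCommGroup G] [Fintype G]
    (hG : Even (Fintype.card G))
    (G₁ : AddSubgroup G) [DecidablePred (· ∈ G₁)] (hidx : G₁.index = 2)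
    (n : ℕ) (hn : Even n) (hnG : Fintype.card G / 2 + 1 ≤ n)
    (k : ℕ) (hk : k = n / 2)
    (A : Finset G) (hA : A.card = n)
    (g : G) (hgG₁ : g ∈ G₁) (hgA : g ∉ A)
    (hsum : ∑ a ∈ A, a = 2 • g)
    (hn₂ : (A.filter (fun a => a ∉ G₁)).card + 3 ≤ k) :
    ∃ B ⊆ A, B.card = k ∧ ∑ b ∈ B, b = g := by
  classical
  set A2 := A.filter (fun a => a ∉ G₁) with hA2
  set A1 := A.filter (fun a => a ∈ G₁) with hA1
  have hcard : A1.card + A2.card = A.card := Finset.card_filter_add_card_filter_not _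
  have hsum2 : ∑ a ∈ A1, a + ∑ a ∈ A2, a = ∑ a ∈ A, a := Finset.sum_filter_add_sum_filter_not _ _ _
  have hA1m : ∀ a ∈ A1, a ∈ G₁ := fun a ha => (Finset.mem_filter.mp ha).2
  have hn2 : n = 2 * k := by
    obtain ⟨r, hr⟩ := hn
    omega
  have hA2m : ∑ a ∈ A2, a ∈ G₁ := by
    have h : ∑ a ∈ A2, a = 2 • g - ∑ a ∈ A1, a := by
      rw [← hsum, ← hsum2]; abel
    rw [h]
    exact G₁.sub_mem (G₁.nsmul_mem hgG₁ 2) (G₁.sum_mem hA1m)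
  obtain ⟨C, hCA, hC⟩ := Finset.exists_subset_card_eq (s := A1) (n := k - A2.card - 3) (by omega)
  have hCm : ∑ a ∈ C, a ∈ G₁ := G₁.sum_mem (fun a ha => hA1m a (hCA ha))
  have hDc : (A1 \ C).card = A1.card - C.card := Finset.card_sdiff_of_subset hCA
  have hDm : ∀ a ∈ A1 \ C, a ∈ G₁ := fun a ha => hA1m a (Finset.mem_sdiff.mp ha).1
  have hmap := Finset.subtype_map_of_mem (p := fun x => x ∈ G₁) hDm
  have hmapc := congrArg Finset.card hmap
  rw [Finset.card_map] at hmapc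
  have hG1c : Fintype.card G₁ * 2 = Fintype.card G := by
    have := G₁.card_mul_index
    rwa [hidx, Nat.card_eq_fintype_card, Nat.card_eq_fintype_card] at this
  obtain ⟨T, hTS, hT3, hTs⟩ := aux_three (K := G₁) ((A1 \ C).subtype (· ∈ G₁)) (by omega)
    ⟨g - ∑ a ∈ A2, a - ∑ a ∈ C, a, G₁.sub_mem (G₁.sub_mem hgG₁ hA2m) hCm⟩
  set T' : Finset G := T.map (Function.Embedding.subtype _) with hT'
  have hT'sub : T' ⊆ A1 \ C := by
    rw [← hmap]
    exact Finset.map_subset_map.mpr hTS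
  have hT'c : T'.card = 3 := by rw [hT', Finset.card_map, hT3]
  have hT's : ∑ x ∈ T', x = g - ∑ a ∈ A2, a - ∑ a ∈ C, a := by
    rw [hT', Finset.sum_map]
    have := congrArg (fun x : G₁ => (x : G)) hTs
    simpa using this
  have hd1 : Disjoint C T' :=
    (Finset.disjoint_sdiff).mono_right hT'sub
  have h12 : Disjoint A1 A2 := Finset.disjoint_filter_filter_not _ _ _
  have hsub : C ∪ T' ⊆ A1 := Finset.union_subset hCA (hT'sub.trans Finset.sdiff_subset)
  have hd2 : Disjoint (C ∪ T') A2 := h12.mono_left hsub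
  refine ⟨(C ∪ T') ∪ A2, Finset.union_subset (hsub.trans (Finset.filter_subset _ _))
    (Finset.filter_subset _ _), ?_, ?_⟩
  · rw [Finset.card_union_of_disjoint hd2, Finset.card_union_of_disjoint hd1, hC, hT'c]
    omega
  · rw [Finset.sum_union hd2, Finset.sum_union hd1, hT's]
    abel
end

section
/- Let G be a finite abelian group of even order, let G_1 be a subgroup of G of index two, and let G_2 be the nontrivial coset of G_1 in G. Let n be an even integer with n ≥ |G|/2 + 1 and set k = n/2. Suppose A is a set of n pairwise distinct elements of G, g ∈ G_2 with g ∉ A, the elements of A sum to 2g, and n_2 := |A ∩ G_2| ≤ k − 3. Then there exists a subset B ⊆ A with |B| = k whose elements sum to g. -/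
open Finset in
theorem pair_aux {H : Type*} [AddCommGroup H] [Fintype H] (R : Finset H) (y : H)
    (hR : Fintype.card H + 2 ≤ 2 * R.card)
    (hy : ∀ a b : H, a + a = y → b + b = y → a = b) :
    ∃ a ∈ R, ∃ b ∈ R, a ≠ b ∧ a + b = y := by
  classical
  have hinj : Function.Injective (fun a : H => y - a) := fun a b h => by simpa using h
  have h1 : (R.image (fun a => y - a)).card = R.card := card_image_of_injective _ hinj
  have h2 := card_union_add_card_inter R (R.image (fun a => y - a))
  have h3 := card_le_univ (R ∪ R.image (fun a => y - a))
  have h4 : 1 < (R ∩ R.image (fun a => y - a)).card := by omega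
  obtain ⟨a, ha, b, hb, hab⟩ := one_lt_card.1 h4
  simp only [mem_inter, mem_image] at ha hb
  obtain ⟨ha, a', ha', rfl⟩ := ha
  obtain ⟨hb, b', hb', rfl⟩ := hb
  by_cases h5 : y - a' = a'
  · by_cases h6 : y - b' = b'
    · exfalso
      apply hab
      rw [h5, h6]
      exact hy _ _ (sub_eq_iff_eq_add.1 h5).symm (sub_eq_iff_eq_add.1 h6).symm
    · exact ⟨_, hb, _, hb', h6, by abel⟩
  · exact ⟨_, ha, _, ha', h5, by abel⟩

open Finset in
theorem exists_C_aux {H : Type*} [AddCommGroup H] [Fintype H] (S : Finset H) (d : ℕ)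
    (hS : Fintype.card H + 1 ≤ 2 * S.card) (hdS : d + 3 ≤ S.card) (h : H) :
    ∃ C ⊆ S, C.card = d + 1 ∧
      ∀ a b : H, a + a = h - ∑ c ∈ C, c → b + b = h - ∑ c ∈ C, c → a = b := by
  classical
  let f : H →+ H := nsmulAddMonoidHom 2
  have hf : ∀ x, f x = x + x := fun x => by simp [f, two_nsmul]
  by_cases hinj : Function.Injective f
  · obtain ⟨C, hC, hc⟩ := exists_subset_card_eq (show d + 1 ≤ S.card by omega)
    refine ⟨C, hC, hc, fun a b ha hb => hinj ?_⟩
    rw [hf, hf, ha, hb]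
  · have hns : ¬ Function.Surjective f := fun hs => hinj (Finite.injective_iff_surjective.2 hs)
    have hne : f.range ≠ ⊤ := fun ht => hns (AddMonoidHom.range_eq_top.1 ht)
    have hi1 : f.range.index ≠ 1 := fun h1 => hne (AddSubgroup.index_eq_one.1 h1)
    have hi0 : f.range.index ≠ 0 := AddSubgroup.index_ne_zero_of_finite
    have hmul := AddSubgroup.card_mul_index f.range
    have hP : 2 * Nat.card f.range ≤ Fintype.card H := by
      rw [← Nat.card_eq_fintype_card, ← hmul, mul_comm]
      exact Nat.mul_le_mul_left _ (by omega)
    obtain ⟨c, hc⟩ : S.Nonempty := card_pos.1 (by omega)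
    obtain ⟨c', hc', hcc⟩ : ∃ c' ∈ S, c' - c ∉ f.range := by
      by_contra! hcon
      have : S.card ≤ Nat.card f.range := by
        have hinj2 : Function.Injective (fun x : S => (⟨x.1 - c, hcon x.1 x.2⟩ : f.range)) := by
          intro x y hxy
          exact Subtype.ext (sub_left_injective (congrArg Subtype.val hxy))
        have := Nat.card_le_card_of_injective _ hinj2
        simpa using this
      omega
    have hcne : c ≠ c' := by
      rintro rfl
      exact hcc (by simp)
    have hcard : ((S.erase c).erase c').card = S.card - 2 := by
      rw [card_erase_of_mem (mem_erase.2 ⟨hcne.symm, hc'⟩), card_erase_of_mem hc]; omega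
    obtain ⟨C, hC, hCc⟩ := exists_subset_card_eq
      (show d ≤ ((S.erase c).erase c').card by omega)
    have hCS : C ⊆ S := fun x hx => mem_of_mem_erase (mem_of_mem_erase (hC hx))
    have hcC : c ∉ C := fun hx => by simpa using hC hx
    have hcC' : c' ∉ C := fun hx => by simpa using hC hx
    by_cases hr : h - ∑ x ∈ insert c C, x ∈ f.range
    · refine ⟨insert c' C, insert_subset hc' hCS, by rw [card_insert_of_notMem hcC', hCc], ?_⟩
      intro a b ha hb
      exfalso
      apply hcc
      have h2 : h - ∑ x ∈ insert c' C, x ∈ f.range := ⟨a, by rw [hf, ha]⟩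
      have h3 := f.range.sub_mem hr h2
      rw [sum_insert hcC, sum_insert hcC'] at h3
      convert h3 using 1
      abel
    · refine ⟨insert c C, insert_subset hc hCS, by rw [card_insert_of_notMem hcC, hCc], ?_⟩
      intro a b ha hb
      exact absurd ⟨a, by rw [hf, ha]⟩ hr

open Finset in
theorem subset_sum_aux {H : Type*} [AddCommGroup H] [Fintype H] (S : Finset H) (d k : ℕ)
    (hk : Fintype.card H + 1 ≤ 2 * k) (hS : S.card = k + d + 2) (h : H) (hk1 : 1 ≤ k) :
    ∃ D ⊆ S, D.card = d + 3 ∧ ∑ x ∈ D, x = h := by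
  classical
  obtain ⟨C, hC, hCc, hu⟩ := exists_C_aux S d (by omega) (by omega) h
  have hR := card_sdiff_of_subset hC
  obtain ⟨a, ha, b, hb, hab, hs⟩ := pair_aux (S \ C) _ (by omega) hu
  rw [mem_sdiff] at ha hb
  have hbC : a ∉ insert b C := by simp [hab, ha.2]
  refine ⟨insert a (insert b C), insert_subset ha.1 (insert_subset hb.1 hC), ?_, ?_⟩
  · rw [card_insert_of_notMem hbC, card_insert_of_notMem hb.2, hCc]
  · rw [sum_insert hbC, sum_insert hb.2, ← add_assoc, hs]; abel

/-- Case II in the proof of Lemma 3.1: `G` a finite abelian group of even order, `G₁` an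
index-two subgroup with nontrivial coset `G₂`, `n` even with `n ≥ |G|/2 + 1`, `k = n/2`,
`A` a set of `n` pairwise distinct elements of `G` summing to `2g`, `g ∈ G₂` (i.e. `g ∉ G₁`),
`g ∉ A`, and `n₂ = |A ∩ G₂| ≤ k - 3`. Then `g` is a sum of `k` pairwise distinct elements
of `A`. -/
theorem iso_dual_max_length_case_II {G : Type*} [AddCommGroup G] [Fintype G]
    (hG : Even (Fintype.card G))
    (G₁ : AddSubgroup G) [DecidablePred (· ∈ G₁)] (hidx : G₁.index = 2)
    (n : ℕ) (hn : Even n) (hnG : Fintype.card G / 2 + 1 ≤ n)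
    (k : ℕ) (hk : k = n / 2)
    (A : Finset G) (hA : A.card = n)
    (g : G) (hgG₂ : g ∉ G₁) (hgA : g ∉ A)
    (hsum : ∑ a ∈ A, a = 2 • g)
    (hn₂ : (A.filter (fun a => a ∉ G₁)).card + 3 ≤ k) :
    ∃ B ⊆ A, B.card = k ∧ ∑ b ∈ B, b = g := by
  classical
  have hcardG : Nat.card G₁ * 2 = Fintype.card G := by
    rw [← hidx, AddSubgroup.card_mul_index, Nat.card_eq_fintype_card]
  have hc1 : Nat.card G₁ = Fintype.card G₁ := Nat.card_eq_fintype_card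
  have hA12 := Finset.card_filter_add_card_filter_not (s := A) (fun a => a ∈ G₁)
  have hAs : (A.subtype (· ∈ G₁)).card = (A.filter (· ∈ G₁)).card := Finset.card_subtype _ _
  have hle := Finset.card_le_univ (A.subtype (· ∈ G₁))
  obtain ⟨x, hx⟩ : (A.filter (fun a => a ∉ G₁)).Nonempty := Finset.card_pos.1 (by omega)
  rw [Finset.mem_filter] at hx
  have hxg : g - x ∈ G₁ := by
    rw [sub_eq_add_neg, AddSubgroup.add_mem_iff_of_index_two hidx]
    simp [hgG₂, hx.2]
  obtain ⟨j, rfl⟩ := hn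
  obtain ⟨d, hd⟩ := Nat.exists_eq_add_of_le hn₂
  obtain ⟨D, hD, hDc, hDs⟩ := subset_sum_aux (A.subtype (· ∈ G₁)) (d + 1) k (by omega) (by omega)
    (∑ a ∈ A.subtype (· ∈ G₁), a - ⟨g - x, hxg⟩) (by omega)
  have hE := Finset.card_sdiff_of_subset hD
  have hEs := Finset.sum_sdiff (f := fun a => a) hD
  rw [hDs] at hEs
  have hEs' : ∑ a ∈ A.subtype (· ∈ G₁) \ D, a = ⟨g - x, hxg⟩ := by
    rw [← eq_sub_iff_add_eq] at hEs
    rw [hEs]; abel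
  generalize hEdef : A.subtype (· ∈ G₁) \ D = E at *
  have hxE : x ∉ E.map (Function.Embedding.subtype _) := by
    intro h
    rw [Finset.mem_map] at h
    obtain ⟨y, _, rfl⟩ := h
    exact hx.2 y.2
  refine ⟨insert x (E.map (Function.Embedding.subtype _)), ?_, ?_, ?_⟩
  · refine Finset.insert_subset hx.1 ?_
    intro z hz
    rw [Finset.mem_map] at hz
    obtain ⟨y, hy, rfl⟩ := hz
    rw [← hEdef, Finset.mem_sdiff, Finset.mem_subtype] at hy
    exact hy.1
  · rw [Finset.card_insert_of_notMem hxE, Finset.card_map]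
    omega
  · rw [Finset.sum_insert hxE, Finset.sum_map]
    have := congrArg (fun z : G₁ => (z : G)) hEs'
    simp only [AddSubgroup.val_finsetSum] at this
    simp only [Function.Embedding.subtype_apply]
    rw [this]; abel
end

section
/- Let G be a finite abelian group, let G[2] denote its 2-torsion subgroup, and let A be a subset of G with |A| > max{(2/5)|G|, 12|G[2]| + 54}. Then either Σ_3(A) = G, or A is contained in a coset of an index-two subgroup of G. -/
namespace Sigma3

open Finset
open scoped Pointwise

theorem num_direct (n t E : ℝ) (ht : t = 3 ∨ t = 4) (hn : 12 * t + 31 ≤ n)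
    (h1 : (n ^ 2 - 3 * n) ^ 2 * 2 ≤ E * (3 * n - 1))
    (h2 : E ≤ n ^ 3 - ((n + 1) / 2 - 2 * t) * n * (n - t)) : False := by
  have h3 : (n ^ 2 - 3 * n) ^ 2 * 2 ≤
      (n ^ 3 - ((n + 1) / 2 - 2 * t) * n * (n - t)) * (3 * n - 1) :=
    h1.trans (mul_le_mul_of_nonneg_right h2 (by rcases ht with rfl | rfl <;> linarith))
  obtain ⟨k, rfl⟩ : ∃ k, n = 12 * t + 31 + k := ⟨n - (12 * t + 31), by ring⟩
  have hk : 0 ≤ k := by linarith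
  rcases ht with rfl | rfl
  · nlinarith [pow_nonneg hk 2, pow_nonneg hk 3, pow_nonneg hk 4]
  · nlinarith [pow_nonneg hk 2, pow_nonneg hk 3, pow_nonneg hk 4]

theorem num_avg (n t E : ℝ) (ht : 5 ≤ t) (hn : 12 * t + 31 ≤ n)
    (h1 : (n ^ 2 - 3 * n) ^ 2 * 2 ≤ E * (3 * n - 1))
    (h2 : E ≤ n ^ 3 - ((n + 1) / 2) * n * (n - t)
      + 6 * n ^ 2 * (n / ((n + 1) / 2 - 2 * t) - 1)) : False := by
  have hρ : 0 < (n + 1) / 2 - 2 * t := by linarith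
  have h4 : E * ((n + 1) / 2 - 2 * t) ≤ (n ^ 3 - ((n + 1) / 2) * n * (n - t))
       * ((n + 1) / 2 - 2 * t) + 6 * n ^ 2 * (n - ((n + 1) / 2 - 2 * t)) := by
    have := mul_le_mul_of_nonneg_right h2 hρ.le
    refine this.trans (le_of_eq ?_)
    have hq : n / ((n + 1) / 2 - 2 * t) * ((n + 1) / 2 - 2 * t) = n := div_mul_cancel₀ _ hρ.ne'
    linear_combination 6 * n ^ 2 * hq
  have h5 : (n ^ 2 - 3 * n) ^ 2 * 2 * ((n + 1) / 2 - 2 * t) ≤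
     ((n ^ 3 - ((n + 1) / 2) * n * (n - t))
       * ((n + 1) / 2 - 2 * t) + 6 * n ^ 2 * (n - ((n + 1) / 2 - 2 * t))) * (3 * n - 1) := by
    have a1 := mul_le_mul_of_nonneg_right h1 hρ.le
    have a2 := mul_le_mul_of_nonneg_right h4 (show 0 ≤ 3 * n - 1 by linarith)
    linarith
  obtain ⟨j, rfl⟩ : ∃ j, t = 5 + j := ⟨t - 5, by ring⟩
  obtain ⟨k, rfl⟩ : ∃ k, n = 12 * (5 + j) + 31 + k := ⟨n - (12 * (5 + j) + 31), by ring⟩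
  have hk : 0 ≤ k := by linarith
  have hj : 0 ≤ j := by linarith
  set n := 12 * (5 + j) + 31 + k with hnn
  have h6 : n * ((n - 3) ^ 2 * 2 * n * ((n + 1) / 2 - 2 * (5 + j))) ≤ n * 
     (((n ^ 2 - ((n + 1) / 2) * (n - (5 + j)))
       * ((n + 1) / 2 - 2 * (5 + j)) + 6 * n * (n - ((n + 1) / 2 - 2 * (5 + j)))) * (3 * n - 1)) := by
    linarith
  have h7 := le_of_mul_le_mul_left h6 (by linarith)
  rw [hnn] at h7
  have h8 : 0 ≤ j * k := mul_nonneg hj hk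
  have p1 : 0 ≤ j ^ 2 * k := by positivity
  have p2 : 0 ≤ j ^ 3 * k := by positivity
  have p3 : 0 ≤ j ^ 2 * k ^ 2 := by positivity
  have p4 : 0 ≤ j * k ^ 2 := by positivity
  have p5 : 0 ≤ j * k ^ 3 := by positivity
  have p6 : 0 ≤ k ^ 4 := by positivity
  have p7 : 0 ≤ k ^ 3 := by positivity
  have p8 : 0 ≤ k ^ 2 := by positivity
  have p9 : 0 ≤ j ^ 4 := by positivity
  have p10 : 0 ≤ j ^ 3 := by positivity
  have p11 : 0 ≤ j ^ 2 := by positivity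
  ring_nf at h7 h8 p1 p2 p3 p4 p5
  linarith

variable {G : Type*} [AddCommGroup G] [DecidableEq G]

/-- number of representations as a difference -/
def rep (A : Finset G) (d : G) : ℕ := #{p ∈ A ×ˢ A | p.1 - p.2 = d}

theorem rep_eq (A : Finset G) (a b : G) :
    #{p ∈ A ×ˢ A | a + p.1 = b + p.2} = rep A (a - b) := by
  unfold rep
  refine card_bij (fun p _ => (p.2, p.1)) ?_ ?_ ?_
  · intro p hp
    simp only [mem_filter, mem_product] at hp ⊢
    exact ⟨⟨hp.1.2, hp.1.1⟩, by rw [sub_eq_sub_iff_add_eq_add, add_comm, ← hp.2, add_comm]⟩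
  · rintro ⟨x, y⟩ _ ⟨z, w⟩ _ h
    simp only [Prod.mk.injEq] at h ⊢
    tauto
  · rintro ⟨x, y⟩ hp
    simp only [mem_filter, mem_product] at hp
    refine ⟨(y, x), ?_, rfl⟩
    simp only [mem_filter, mem_product]
    refine ⟨⟨hp.1.2, hp.1.1⟩, ?_⟩
    have := sub_eq_sub_iff_add_eq_add.1 hp.2
    rw [add_comm b x, this]

theorem energy_eq (A : Finset G) :
    addEnergy A A = ∑ p ∈ A ×ˢ A, rep A (p.1 - p.2) := by
  unfold addEnergy
  rw [card_filter, sum_product]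
  refine sum_congr rfl fun p _ => ?_
  rw [← rep_eq, card_filter]

theorem rep_eq_inter (A : Finset G) (a b : G) :
    rep A (a - b) = #(A.image (a + ·) ∩ A.image (b + ·)) := by
  rw [← rep_eq]
  refine card_bij (fun p _ => a + p.1) ?_ ?_ ?_
  · intro p hp
    simp only [mem_filter, mem_product] at hp
    simp only [mem_inter, mem_image]
    exact ⟨⟨_, hp.1.1, rfl⟩, ⟨_, hp.1.2, hp.2.symm⟩⟩
  · rintro ⟨x, y⟩ h1 ⟨z, w⟩ h2 h
    simp only [mem_filter, mem_product] at h1 h2 h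
    have e : x = z := add_left_cancel h
    subst e
    have : b + y = b + w := by rw [← h1.2, ← h2.2]
    simp [add_left_cancel this]
  · intro x hx
    simp only [mem_inter, mem_image] at hx
    obtain ⟨⟨u, hu, rfl⟩, v, hv, hv2⟩ := hx
    exact ⟨(u, v), by simp [hu, hv, hv2], rfl⟩

theorem rep_le (A : Finset G) (a b : G) : rep A (a - b) ≤ #A := by
  rw [rep_eq_inter]
  exact (card_le_card inter_subset_left).trans card_image_le

theorem sum_inv (A : Finset G) :
    ∑ p ∈ A ×ˢ A, (1 / (rep A (p.1 - p.2) : ℝ)) =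
      #((A ×ˢ A).image fun p => p.1 - p.2) := by
  rw [← sum_fiberwise_of_maps_to (g := fun p : G × G => p.1 - p.2)
    (t := (A ×ˢ A).image fun p => p.1 - p.2) (fun p hp => mem_image_of_mem _ hp)]
  rw [card_eq_sum_ones, Nat.cast_sum]
  refine sum_congr rfl fun d hd => ?_
  have : ∀ p ∈ (A ×ˢ A).filter (fun p => p.1 - p.2 = d),
      (1 / (rep A (p.1 - p.2) : ℝ)) = 1 / (rep A d : ℝ) := by
    intro p hp
    rw [(mem_filter.1 hp).2]
  rw [sum_congr rfl this, sum_const, nsmul_eq_mul]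
  change (rep A d : ℝ) * _ = _
  have h0 : rep A d ≠ 0 := by
    obtain ⟨p, hp, rfl⟩ := mem_image.1 hd
    unfold rep
    have hm : p ∈ {q ∈ A ×ˢ A | q.1 - q.2 = p.1 - p.2} := mem_filter.2 ⟨hp, rfl⟩
    exact (card_pos.2 ⟨p, hm⟩).ne'
  have : (rep A d : ℝ) ≠ 0 := by exact_mod_cast h0
  field_simp
  simp

theorem energy_upper (A : Finset G) (μ ρ : ℝ) (β : G → ℝ)
    (hβ : ∀ a, 0 ≤ β a) (hρ : 0 < ρ)
    (h1 : ∀ a ∈ A, ∀ b ∈ A, ρ ≤ rep A (a - b))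
    (h2 : ∀ a ∈ A, ∀ b ∈ A, μ - β a - β b ≤ rep A (a - b)) :
    (addEnergy A A : ℝ) ≤ (#A : ℝ) ^ 3 + μ * (#A : ℝ) ^ 2
      - μ * #A * #((A ×ˢ A).image fun p => p.1 - p.2)
      + 2 * #A * (∑ a ∈ A, β a) * (#A / ρ - 1) := by
  have key : ∀ p ∈ A ×ˢ A, (rep A (p.1 - p.2) : ℝ) ≤ (#A : ℝ) + μ
      - μ * #A * (1 / (rep A (p.1 - p.2) : ℝ)) + (β p.1 + β p.2) * (#A / ρ - 1) := by
    intro p hp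
    obtain ⟨ha, hb⟩ := mem_product.1 hp
    have e1 := h1 _ ha _ hb
    have e2 := h2 _ ha _ hb
    have e3 : (rep A (p.1 - p.2) : ℝ) ≤ #A := by exact_mod_cast rep_le A p.1 p.2
    set r : ℝ := (rep A (p.1 - p.2) : ℝ)
    have hr : 0 < r := by linarith
    have hb1 := hβ p.1
    have hb2 := hβ p.2
    have e4 : 0 ≤ (r - μ + (β p.1 + β p.2)) * (#A - r) / r :=
      div_nonneg (mul_nonneg (by linarith) (by linarith)) hr.le
    have e5 : (r - μ + (β p.1 + β p.2)) * (#A - r) / r =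
        #A - r - μ * #A * (1 / r) + μ + (β p.1 + β p.2) * (#A / r - 1) := by
      field_simp
      ring
    have e6 : (#A : ℝ) / r ≤ #A / ρ := by gcongr
    have e7 : (β p.1 + β p.2) * (#A / r - 1) ≤ (β p.1 + β p.2) * (#A / ρ - 1) := by
      gcongr
    linarith
  rw [energy_eq, Nat.cast_sum]
  refine (sum_le_sum key).trans (le_of_eq ?_)
  have hs : ∑ p ∈ A ×ˢ A, (β p.1 + β p.2) = 2 * #A * ∑ a ∈ A, β a := by
    rw [sum_add_distrib, sum_product, sum_product]
    simp only [sum_const, nsmul_eq_mul, ← mul_sum]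
    ring
  rw [sum_add_distrib, sum_sub_distrib, ← mul_sum, sum_inv, ← sum_mul, hs]
  simp only [sum_const, card_product, nsmul_eq_mul]
  push_cast
  ring

/-- number of `b ∈ A` such that `a + b` lies in `g - A` -/
def bad (A : Finset G) (g a : G) : ℕ := #{b ∈ A | g - (a + b) ∈ A}

theorem bad_split (A : Finset G) (g : G)
    (hno : ∀ a ∈ A, ∀ b ∈ A, ∀ c ∈ A, a + b + c = g → a = b ∨ a = c ∨ b = c)
    (a : G) (ha : a ∈ A) : bad A g a ≤ 2 + #{b ∈ A | b + b = g - a} := by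
  have hsub : {b ∈ A | g - (a + b) ∈ A} ⊆
      ({a, g - (a + a)} : Finset G) ∪ {b ∈ A | b + b = g - a} := by
    intro b hb
    obtain ⟨hb, hc⟩ := mem_filter.1 hb
    simp only [mem_union, mem_insert, mem_singleton, mem_filter]
    rcases hno a ha b hb _ hc (by abel) with h | h | h
    · exact Or.inl (Or.inl h.symm)
    · refine Or.inl (Or.inr ?_)
      rw [eq_sub_iff_add_eq] at h ⊢
      rw [← h]; abel
    · refine Or.inr ⟨hb, ?_⟩
      rw [eq_sub_iff_add_eq] at h ⊢
      rw [← h]; abel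
  unfold bad
  refine (card_le_card hsub).trans ((card_union_le _ _).trans ?_)
  gcongr
  exact card_le_two

theorem fiber_le [Finite G] (A : Finset G) (x : G) :
    #{b ∈ A | b + b = x} ≤ Nat.card {x : G | 2 • x = 0} := by
  rcases ({b ∈ A | b + b = x} : Finset G).eq_empty_or_nonempty with h | ⟨b₀, hb₀⟩
  · rw [h]; simp
  · have hb := (mem_filter.1 hb₀).2
    rw [← card_image_of_injective _ (sub_left_injective (b := b₀)), ← Set.ncard_coe_finset]
    refine Set.ncard_le_ncard ?_ (Set.toFinite _)
    intro z hz
    rw [mem_coe, mem_image] at hz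
    obtain ⟨b, hb', rfl⟩ := hz
    have hb2 := (mem_filter.1 hb').2
    change 2 • (b - b₀) = 0
    rw [smul_sub, two_nsmul, two_nsmul, hb, hb2, sub_self]

theorem sum_fiber (A : Finset G) (g : G) :
    ∑ a ∈ A, #{b ∈ A | b + b = g - a} ≤ #A := by
  have : ∀ a, #{b ∈ A | b + b = g - a} = #{b ∈ A | g - (b + b) = a} := by
    intro a
    congr 1
    ext b
    simp only [mem_filter, and_congr_right_iff]
    intro _
    constructor
    · intro h; rw [h]; abel
    · intro h; rw [← h]; abel
  simp only [this]
  rw [sum_card_fiberwise_eq_card_filter]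
  exact card_filter_le _ _

theorem sum_bad (A : Finset G) (g : G)
    (hno : ∀ a ∈ A, ∀ b ∈ A, ∀ c ∈ A, a + b + c = g → a = b ∨ a = c ∨ b = c) :
    ∑ a ∈ A, bad A g a ≤ 3 * #A := by
  refine (sum_le_sum (bad_split A g hno)).trans ?_
  rw [sum_add_distrib]
  have := sum_fiber A g
  simp only [sum_const, smul_eq_mul]
  omega

variable [Fintype G]

theorem bad_le (A : Finset G) (g : G)
    (hno : ∀ a ∈ A, ∀ b ∈ A, ∀ c ∈ A, a + b + c = g → a = b ∨ a = c ∨ b = c)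
    (a : G) (ha : a ∈ A) : bad A g a ≤ Nat.card {x : G | 2 • x = 0} + 2 := by
  have := bad_split A g hno a ha
  have := fiber_le A (g - a)
  omega

theorem card_S (A : Finset G) (g : G) :
    #(univ.filter fun x => g - x ∉ A) + #A = Fintype.card G := by
  have h : #(univ.filter fun x => g - x ∈ A) = #A := by
    refine card_bij (fun x _ => g - x) ?_ ?_ ?_
    · intro x hx; exact (mem_filter.1 hx).2
    · intro x _ y _ h; exact sub_right_injective h
    · intro y hy; exact ⟨g - y, by simp [hy], by simp⟩
  have := card_filter_add_card_filter_not (s := (univ : Finset G)) (fun x => g - x ∈ A)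
  rw [h, card_univ] at this
  omega

theorem rep_ge (A : Finset G) (g a b : G) :
    2 * #A ≤ rep A (a - b) + bad A g a + bad A g b + #(univ.filter fun x => g - x ∉ A) := by
  set S := (univ : Finset G).filter fun x => g - x ∉ A with hS
  have h : ∀ a, #((A.image (a + ·)) ∩ S) + bad A g a = #A := by
    intro a
    have e1 : #((A.image (a + ·)) ∩ S) = #{b ∈ A | ¬ (g - (a + b) ∈ A)} := by
      rw [← card_image_of_injective {b ∈ A | ¬ (g - (a + b) ∈ A)} (add_right_injective a)]
      congr 1
      ext x
      simp only [hS, mem_inter, mem_image, mem_filter, mem_univ, true_and]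
      constructor
      · rintro ⟨⟨y, hy, rfl⟩, h⟩; exact ⟨y, ⟨hy, h⟩, rfl⟩
      · rintro ⟨y, ⟨hy, h⟩, rfl⟩; exact ⟨⟨y, hy, rfl⟩, h⟩
    have := card_filter_add_card_filter_not (s := A) (fun b => g - (a + b) ∈ A)
    rw [e1]; unfold bad; omega
  have ha := h a
  have hb := h b
  have e2 := card_union_add_card_inter ((A.image (a + ·)) ∩ S) ((A.image (b + ·)) ∩ S)
  have e3 : #((A.image (a + ·)) ∩ S ∪ (A.image (b + ·)) ∩ S) ≤ #S :=
    card_le_card (union_subset inter_subset_right inter_subset_right)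
  have e4 : #((A.image (a + ·)) ∩ S ∩ ((A.image (b + ·)) ∩ S)) ≤ rep A (a - b) := by
    rw [rep_eq_inter]
    exact card_le_card (inter_subset_inter inter_subset_left inter_subset_left)
  omega

theorem good_pairs (A : Finset G) (g : G) :
    #{p ∈ A ×ˢ A | p.1 + p.2 ∈ univ.filter fun x => g - x ∉ A} + ∑ a ∈ A, bad A g a
      = #A ^ 2 := by
  have h1 : ∑ a ∈ A, bad A g a = #{p ∈ A ×ˢ A | g - (p.1 + p.2) ∈ A} := by
    rw [card_filter, sum_product]
    refine sum_congr rfl fun a _ => ?_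
    unfold bad; rw [card_filter]
  have := card_filter_add_card_filter_not (s := A ×ˢ A) (fun p => g - (p.1 + p.2) ∈ A)
  rw [card_product] at this
  rw [h1, sq, ← this, add_comm]
  simp

theorem diff_ge (A : Finset G) (g x y : G) (hx : x ∈ A) (hy : y ∈ A) :
    2 * #A ≤ #((A ×ˢ A).image fun p => p.1 - p.2) + bad A g (g - (x + y)) := by
  have e := card_union_add_card_inter (A.image (· - x)) (A.image (y - ·))
  rw [card_image_of_injective _ (sub_left_injective), card_image_of_injective _
    (sub_right_injective)] at e
  have e1 : #(A.image (· - x) ∪ A.image (y - ·)) ≤ #((A ×ˢ A).image fun p => p.1 - p.2) := by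
    refine card_le_card (union_subset ?_ ?_)
    · intro z hz
      obtain ⟨a, ha, rfl⟩ := mem_image.1 hz
      exact mem_image.2 ⟨(a, x), mem_product.2 ⟨ha, hx⟩, rfl⟩
    · intro z hz
      obtain ⟨a, ha, rfl⟩ := mem_image.1 hz
      exact mem_image.2 ⟨(y, a), mem_product.2 ⟨hy, ha⟩, rfl⟩
  have e2 : #(A.image (· - x) ∩ A.image (y - ·)) ≤ bad A g (g - (x + y)) := by
    unfold bad
    rw [← card_image_of_injective {b ∈ A | g - (g - (x + y) + b) ∈ A}
      (sub_left_injective (b := x))]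
    refine card_le_card ?_
    intro z hz
    simp only [mem_inter, mem_image] at hz
    obtain ⟨⟨a, ha, rfl⟩, b, hb, h⟩ := hz
    refine mem_image.2 ⟨a, mem_filter.2 ⟨ha, ?_⟩, rfl⟩
    have : g - (g - (x + y) + a) = b := by
      rw [sub_eq_sub_iff_add_eq_add] at h
      have : b = y + x - a := by rw [h]; abel
      rw [this]; abel
    rw [this]; exact hb
  omega

theorem no_bad_sum (A : Finset G) (g : G)
    (hno : ∀ a ∈ A, ∀ b ∈ A, ∀ c ∈ A, a + b + c = g → a = b ∨ a = c ∨ b = c)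
    (hA1 : 2 * Fintype.card G < 5 * #A)
    (hA2 : 12 * Nat.card {x : G | 2 • x = 0} + 54 < #A) :
    ∀ x ∈ A, ∀ y ∈ A, g - (x + y) ∉ A := by
  intro x hx y hy hxy
  set L := Nat.card {x : G | 2 • x = 0} with hL
  have hL1 : 1 ≤ L := by
    have : Nonempty {x : G | 2 • x = 0} := ⟨⟨0, by simp⟩⟩
    exact Nat.card_pos
  have hL3 : L ≠ 0 := by omega
  have hbad := bad_le A g hno
  rw [← hL] at hbad
  have hsum := sum_bad A g hno
  have hD := diff_ge A g x y hx hy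
  have hD2 := hbad _ hxy
  have hS := card_S A g
  have hgood := good_pairs A g
  have hE := card_sq_le_card_mul_addEnergy A A (univ.filter fun x => g - x ∉ A)
  have hrep := rep_ge A g
  set s := #(univ.filter fun x => g - x ∉ A)
  set P := #{p ∈ A ×ˢ A | p.1 + p.2 ∈ univ.filter fun x => g - x ∉ A}
  set D := #((A ×ˢ A).image fun p => p.1 - p.2) with hDdef
  have hs : 2 * s + 1 ≤ 3 * #A := by omega
  have hsR : 2 * (s : ℝ) + 1 ≤ 3 * #A := by exact_mod_cast hs
  have hnR : 12 * ((L : ℝ) + 2) + 31 ≤ #A := by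
    have : 12 * (L + 2) + 31 ≤ #A := by omega
    exact_mod_cast this
  have hLR : (1 : ℝ) ≤ L := by exact_mod_cast hL1
  have hDR : 2 * (#A : ℝ) ≤ D + (L + 2) := by
    have : 2 * #A ≤ D + (L + 2) := by omega
    exact_mod_cast this
  have hPR : (#A : ℝ) ^ 2 - 3 * #A ≤ P := by
    have : #A ^ 2 ≤ P + 3 * #A := by omega
    have : (#A : ℝ) ^ 2 ≤ P + 3 * #A := by exact_mod_cast this
    linarith
  have hER : (P : ℝ) ^ 2 ≤ s * addEnergy A A := by exact_mod_cast hE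
  have hrepR : ∀ a ∈ A, ∀ b ∈ A,
      ((#A : ℝ) + 1) / 2 - bad A g a - bad A g b ≤ rep A (a - b) := by
    intro a _ b _
    have : 2 * (#A : ℝ) ≤ rep A (a - b) + bad A g a + bad A g b + s := by
      exact_mod_cast hrep a b
    linarith
  have hbadR : ∀ a ∈ A, (bad A g a : ℝ) ≤ L + 2 := by
    intro a ha
    exact_mod_cast hbad a ha
  have hrepR2 : ∀ a ∈ A, ∀ b ∈ A,
      ((#A : ℝ) + 1) / 2 - 2 * (L + 2) ≤ rep A (a - b) := by
    intro a ha b hb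
    have := hrepR a ha b hb
    have := hbadR a ha
    have := hbadR b hb
    linarith
  have hsumR : ∑ a ∈ A, (bad A g a : ℝ) ≤ 3 * #A := by exact_mod_cast hsum
  set n : ℝ := (#A : ℝ)
  set E : ℝ := (addEnergy A A : ℝ)
  have hE0 : 0 ≤ E := Nat.cast_nonneg _
  have hρ : 0 < (n + 1) / 2 - 2 * ((L : ℝ) + 2) := by linarith
  have hn0 : 0 < n := by linarith
  have h1 : (n ^ 2 - 3 * n) ^ 2 * 2 ≤ E * (3 * n - 1) := by
    have q0 : 0 ≤ n ^ 2 - 3 * n := by nlinarith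
    have q1 : (n ^ 2 - 3 * n) ^ 2 ≤ (P : ℝ) ^ 2 := by gcongr
    have q2 : E * (2 * s) ≤ E * (3 * n - 1) := by
      apply mul_le_mul_of_nonneg_left _ hE0; linarith
    linarith
  rcases le_or_gt L 2 with hL2 | hL2
  · refine num_direct n (L + 2) E ?_ hnR h1 ?_
    · have : L = 1 ∨ L = 2 := by omega
      rcases this with h | h <;> rw [h] <;> norm_num
    · have := energy_upper A ((n + 1) / 2 - 2 * ((L : ℝ) + 2)) _ (fun _ => 0) (fun _ => le_rfl) hρ
        hrepR2 (fun a ha b hb => by simpa using hrepR2 a ha b hb)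
      simp only [sum_const_zero, mul_zero, zero_mul, add_zero] at this
      rw [← hDdef] at this
      have q := mul_le_mul_of_nonneg_left hDR (mul_pos hρ hn0).le
      nlinarith
  · have hL5 : (5 : ℝ) ≤ (L : ℝ) + 2 := by
      have : (3 : ℝ) ≤ L := by exact_mod_cast hL2
      linarith
    refine num_avg n (L + 2) E hL5 hnR h1 ?_
    have := energy_upper A ((n + 1) / 2) _ (fun a => (bad A g a : ℝ))
      (fun _ => Nat.cast_nonneg _) hρ hrepR2 hrepR
    rw [← hDdef] at this
    have q := mul_le_mul_of_nonneg_left hDR (show 0 ≤ (n + 1) / 2 * n by positivity)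
    have q2 : 0 ≤ n / ((n + 1) / 2 - 2 * ((L : ℝ) + 2)) - 1 := by
      rw [sub_nonneg, one_le_div hρ]; linarith
    have q3 : 2 * n * (∑ a ∈ A, (bad A g a : ℝ)) *
        (n / ((n + 1) / 2 - 2 * ((L : ℝ) + 2)) - 1) ≤
        2 * n * (3 * n) * (n / ((n + 1) / 2 - 2 * ((L : ℝ) + 2)) - 1) := by
      gcongr
    linarith

theorem exists_subgroup (A : Finset G) (h : (#(A + A) : ℚ) < (3 / 2 : ℚ) * #A) :
    ∃ H : AddSubgroup G, (Nat.card H : ℚ) < (3 / 2 : ℚ) * #A ∧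
      ∀ a ∈ A, ∀ b ∈ A, b - a ∈ H := by
  obtain ⟨H, hF, hc, hsub⟩ := doubling_lt_three_halves (G := Multiplicative G) (A := A) h
  refine ⟨Subgroup.toAddSubgroup' H, ?_, ?_⟩
  · rw [← Nat.card_eq_fintype_card] at hc
    exact hc
  · intro a ha b hb
    have h1 := (hsub a ha).1 hb
    obtain ⟨y, hy, hyb⟩ := h1
    have hyb2 : a + (show G from y) = b := hyb
    have h2 : (show G from y) ∈ Subgroup.toAddSubgroup' H := hy
    rw [← hyb2, add_sub_cancel_left]
    exact h2

end Sigma3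

open scoped Pointwise in
theorem sigma3_or_coset {G : Type*} [AddCommGroup G] [Fintype G]
    (A : Finset G)
    (hA : (A.card : ℚ) >
      max ((2 / 5 : ℚ) * Fintype.card G)
        (12 * (Nat.card {x : G | 2 • x = 0}) + 54)) :
    (∀ g : G, ∃ B ⊆ A, B.card = 3 ∧ ∑ b ∈ B, b = g) ∨
      (∃ H : AddSubgroup G, H.index = 2 ∧ ∃ c : G, ∀ a ∈ A, a - c ∈ H) := by
  classical
  by_cases hall : ∀ g : G, ∃ B ⊆ A, B.card = 3 ∧ ∑ b ∈ B, b = g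
  · exact Or.inl hall
  right
  push Not at hall
  obtain ⟨g, hg⟩ := hall
  obtain ⟨hq1, hq2⟩ := max_lt_iff.1 hA
  have hA1 : 2 * Fintype.card G < 5 * A.card := by
    have : 2 * (Fintype.card G : ℚ) < 5 * A.card := by linarith
    exact_mod_cast this
  have hA2 : 12 * Nat.card {x : G | 2 • x = 0} + 54 < A.card := by exact_mod_cast hq2
  have hno : ∀ a ∈ A, ∀ b ∈ A, ∀ c ∈ A, a + b + c = g → a = b ∨ a = c ∨ b = c := by
    intro a ha b hb c hc habc
    by_contra hne
    push Not at hne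
    obtain ⟨hab, hac, hbc⟩ := hne
    refine hg {a, b, c} ?_ (Finset.card_eq_three.2 ⟨a, b, c, hab, hac, hbc, rfl⟩) ?_
    · intro x hx
      simp only [Finset.mem_insert, Finset.mem_singleton] at hx
      rcases hx with rfl | rfl | rfl <;> assumption
    · rw [Finset.sum_insert (by simp [hab, hac]), Finset.sum_pair hbc, ← habc, add_assoc]
  have hns := Sigma3.no_bad_sum A g hno hA1 hA2
  have hS := Sigma3.card_S A g
  have hsub : A + A ⊆ Finset.univ.filter fun x => g - x ∉ A := by
    intro z hz
    obtain ⟨x, hx, y, hy, rfl⟩ := Finset.mem_add.1 hz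
    exact Finset.mem_filter.2 ⟨Finset.mem_univ _, hns x hx y hy⟩
  have hle := Finset.card_le_card hsub
  obtain ⟨a₀, ha₀⟩ : A.Nonempty := Finset.card_pos.1 (by omega)
  have hge : A.card ≤ (A + A).card := Finset.card_le_card_add_right ⟨a₀, ha₀⟩
  obtain ⟨H, hH1, hH2⟩ := Sigma3.exists_subgroup A (by
    have : 2 * (A + A).card < 3 * A.card := by omega
    have : 2 * ((A + A).card : ℚ) < 3 * A.card := by exact_mod_cast this
    linarith)
  refine ⟨H, ?_, a₀, fun a ha => hH2 a₀ ha₀ a ha⟩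
  have hcardH : A.card ≤ Nat.card H := by
    rw [← Finset.card_image_of_injective A (sub_left_injective (b := a₀)),
      ← Set.ncard_coe_finset]
    refine Set.ncard_le_ncard (t := (H : Set G)) ?_ (Set.toFinite _)
    intro z hz
    rw [Finset.mem_coe, Finset.mem_image] at hz
    obtain ⟨b, hb, rfl⟩ := hz
    exact hH2 a₀ ha₀ b hb
  have hH3 : 2 * Nat.card H < 3 * A.card := by
    have : 2 * (Nat.card H : ℚ) < 3 * A.card := by linarith
    exact_mod_cast this
  have hidx := H.card_mul_index
  rw [Nat.card_eq_fintype_card (α := G)] at hidx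
  have hi0 : H.index ≠ 0 := by
    intro h0; rw [h0] at hidx; have := Fintype.card_pos (α := G); omega
  have hi1 : H.index ≠ 1 := by
    intro h0; rw [h0] at hidx; omega
  have hi3 : H.index < 3 := by
    by_contra hcon
    have : Nat.card H * 3 ≤ Nat.card H * H.index := Nat.mul_le_mul_left _ (by omega)
    omega
  omega
end

section
/- Let G be an additive abelian group, let Q_1, ..., Q_s and P_1, ..., P_n be elements of G of finite order such that the order of Q_j is coprime to the order of P_i for all 1 ≤ i ≤ n and 1 ≤ j ≤ s, and let k be a positive integer. Suppose that for all nonnegative integers k_1, ..., k_s with k_1 + ... + k_s = k one has [k_1]Q_1 + ... + [k_s]Q_s ≠ 0. Then for every choice of indices j_1, ..., j_k ∈ {1, ..., s} and i_1, ..., i_k ∈ {1, ..., n}, the sum (Q_{j_1} + P_{i_1}) + ... + (Q_{j_k} + P_{i_k}) is nonzero. -/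
/-- Lemma 2.5 (group-theoretic content): let `G` be an additive abelian group and
`Q₁, …, Q_s`, `P₁, …, P_n` elements of finite order such that the order of each `Q j` is
coprime to the order of each `P i`. If `[k₁]Q₁ + ⋯ + [k_s]Q_s ≠ 0` for all nonnegative
`k₁ + ⋯ + k_s = k`, then any sum of `k` terms of the form `Q j + P i` is nonzero. -/
theorem mds_elliptic_construction {G : Type*} [AddCommGroup G] (s n k : ℕ) (hk : 0 < k)
    (Q : Fin s → G) (P : Fin n → G)
    (hQ : ∀ j, IsOfFinAddOrder (Q j)) (hP : ∀ i, IsOfFinAddOrder (P i))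
    (hcop : ∀ (i : Fin n) (j : Fin s), Nat.Coprime (addOrderOf (Q j)) (addOrderOf (P i)))
    (hne : ∀ κ : Fin s → ℕ, (∑ j, κ j) = k → ∑ j, κ j • Q j ≠ 0) :
    ∀ (jdx : Fin k → Fin s) (idx : Fin k → Fin n),
      ∑ m, (Q (jdx m) + P (idx m)) ≠ 0 := by
  intro jdx idx h
  rw [Finset.sum_add_distrib] at h
  have hA : (∏ j, addOrderOf (Q j)) • ∑ m, Q (jdx m) = 0 := by
    rw [Finset.smul_sum]
    refine Finset.sum_eq_zero fun m _ => ?_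
    exact addOrderOf_dvd_iff_nsmul_eq_zero.mp
      (Finset.dvd_prod_of_mem (fun j => addOrderOf (Q j)) (Finset.mem_univ (jdx m)))
  have hB : (∏ i, addOrderOf (P i)) • ∑ m, P (idx m) = 0 := by
    rw [Finset.smul_sum]
    refine Finset.sum_eq_zero fun m _ => ?_
    exact addOrderOf_dvd_iff_nsmul_eq_zero.mp
      (Finset.dvd_prod_of_mem (fun i => addOrderOf (P i)) (Finset.mem_univ (idx m)))
  have hB' : (∏ i, addOrderOf (P i)) • ∑ m, Q (jdx m) = 0 := by
    rw [eq_neg_of_add_eq_zero_left h, smul_neg, hB, neg_zero]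
  have hc : Nat.Coprime (∏ j, addOrderOf (Q j)) (∏ i, addOrderOf (P i)) :=
    Nat.Coprime.prod_left fun j _ => Nat.Coprime.prod_right fun i _ => hcop i j
  have h0 : ∑ m, Q (jdx m) = 0 := by
    rw [← AddMonoid.addOrderOf_eq_one_iff]
    exact Nat.eq_one_of_dvd_coprimes hc (addOrderOf_dvd_iff_nsmul_eq_zero.mpr hA)
      (addOrderOf_dvd_iff_nsmul_eq_zero.mpr hB')
  refine hne (fun j => (Finset.univ.filter fun m => jdx m = j).card) ?_ ?_
  · rw [← Finset.card_eq_sum_card_fiberwise (fun m _ => Finset.mem_coe.mpr (Finset.mem_univ (jdx m)))]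
    simp
  · rw [← h0, ← Finset.sum_fiberwise Finset.univ jdx]
    refine Finset.sum_congr rfl fun j _ => ?_
    rw [← Finset.sum_const]
    refine Finset.sum_congr rfl fun m hm => ?_
    rw [(Finset.mem_filter.mp hm).2]
end

section
/- Let G be an additive abelian group, let Q_1, ..., Q_s, P_1, ..., P_n and Q'_1, ..., Q'_t be elements of G of finite order such that the order of each Q_j and the order q_u of each Q'_u is coprime to the order of P_i for all i, j, u. Let k be a positive integer and let m_1, ..., m_t be nonnegative integers. Suppose that for all nonnegative integers k_1, ..., k_s with k_1 + ... + k_s = k one has [k_1]Q_1 + ... + [k_s]Q_s + [q_1 − m_1]Q'_1 + ... + [q_t − m_t]Q'_t ≠ 0. Then for every choice of indices j_1, ..., j_k ∈ {1, ..., s} and i_1, ..., i_k ∈ {1, ..., n}, the sum (Q_{j_1} + P_{i_1}) + ... + (Q_{j_k} + P_{i_k}) is different from [m_1]Q'_1 + ... + [m_t]Q'_t. -/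
/-- Corollary 2.6 (group-theoretic content): let `G` be an additive abelian group and
`Q₁, …, Q_s`, `P₁, …, P_n`, `Q'₁, …, Q'_t` elements of finite order such that the orders of
the `Q j` and the orders `q u` of the `Q' u` are coprime to the orders of the `P i`. Let
`k > 0` and `m₁, …, m_t` be nonnegative integers with `m u ≤ q u`. If
`[k₁]Q₁ + ⋯ + [k_s]Q_s + [q₁ - m₁]Q'₁ + ⋯ + [q_t - m_t]Q'_t ≠ 0` for all nonnegative
`k₁ + ⋯ + k_s = k`, then any sum of `k` terms of the form `Q j + P i` is different from
`[m₁]Q'₁ + ⋯ + [m_t]Q'_t`. -/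
theorem mds_elliptic_construction_general {G : Type*} [AddCommGroup G]
    (s n t k : ℕ) (hk : 0 < k)
    (Q : Fin s → G) (P : Fin n → G) (Q' : Fin t → G)
    (hQ : ∀ j, IsOfFinAddOrder (Q j)) (hP : ∀ i, IsOfFinAddOrder (P i))
    (hQ' : ∀ u, IsOfFinAddOrder (Q' u))
    (hcopQ : ∀ (i : Fin n) (j : Fin s), Nat.Coprime (addOrderOf (Q j)) (addOrderOf (P i)))
    (hcopQ' : ∀ (i : Fin n) (u : Fin t), Nat.Coprime (addOrderOf (Q' u)) (addOrderOf (P i)))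
    (m : Fin t → ℕ) (hm : ∀ u, m u ≤ addOrderOf (Q' u))
    (hne : ∀ κ : Fin s → ℕ, (∑ j, κ j) = k →
      ∑ j, κ j • Q j + ∑ u, (addOrderOf (Q' u) - m u) • Q' u ≠ 0) :
    ∀ (jdx : Fin k → Fin s) (idx : Fin k → Fin n),
      ∑ i, (Q (jdx i) + P (idx i)) ≠ ∑ u, m u • Q' u := by
  intro jdx idx heq
  set A : ℕ := ∏ i, addOrderOf (P i) with hA
  set B : ℕ := (∏ j, addOrderOf (Q j)) * ∏ u, addOrderOf (Q' u) with hB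
  have hcop : Nat.Coprime B A := by
    rw [hA, hB]
    refine Nat.Coprime.mul_left ?_ ?_
    · exact Nat.Coprime.prod_left fun j _ => Nat.Coprime.prod_right fun i _ => hcopQ i j
    · exact Nat.Coprime.prod_left fun u _ => Nat.Coprime.prod_right fun i _ => hcopQ' i u
  have hAP : ∀ i, A • P i = 0 := fun i =>
    addOrderOf_dvd_iff_nsmul_eq_zero.1 (Finset.dvd_prod_of_mem _ (Finset.mem_univ i))
  have hBQ : ∀ j, B • Q j = 0 := fun j =>
    addOrderOf_dvd_iff_nsmul_eq_zero.1 (Dvd.dvd.mul_right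
      (Finset.dvd_prod_of_mem (fun j => addOrderOf (Q j)) (Finset.mem_univ j)) _)
  have hBQ' : ∀ u, B • Q' u = 0 := fun u =>
    addOrderOf_dvd_iff_nsmul_eq_zero.1 (Dvd.dvd.mul_left
      (Finset.dvd_prod_of_mem (fun u => addOrderOf (Q' u)) (Finset.mem_univ u)) _)
  set X : G := ∑ i, Q (jdx i) - ∑ u, m u • Q' u with hX
  have hXP : X = - ∑ i, P (idx i) := by
    rw [Finset.sum_add_distrib] at heq
    rw [hX, ← heq]
    abel
  have hAX : A • X = 0 := by
    rw [hXP, smul_neg, Finset.smul_sum]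
    simp [hAP]
  have hBX : B • X = 0 := by
    rw [hX, smul_sub, Finset.smul_sum, Finset.smul_sum]
    simp [hBQ, smul_comm B, hBQ']
  have hX0 : X = 0 := by
    have h1 : addOrderOf X ∣ 1 := by
      rw [← Nat.Coprime.gcd_eq_one hcop]
      exact Nat.dvd_gcd (addOrderOf_dvd_iff_nsmul_eq_zero.2 hBX)
        (addOrderOf_dvd_iff_nsmul_eq_zero.2 hAX)
    simpa using addOrderOf_dvd_iff_nsmul_eq_zero.1 h1
  refine hne (fun j => (Finset.univ.filter fun i => jdx i = j).card) ?_ ?_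
  · have := Finset.card_eq_sum_card_fiberwise (s := (Finset.univ : Finset (Fin k)))
      (t := Finset.univ) (f := jdx) (by simp)
    simpa using this.symm
  · have h1 : ∑ j, (Finset.univ.filter fun i => jdx i = j).card • Q j = ∑ i, Q (jdx i) := by
      rw [← Finset.sum_fiberwise Finset.univ jdx (fun i => Q (jdx i))]
      refine Finset.sum_congr rfl fun j _ => ?_
      rw [← Finset.sum_const]
      refine Finset.sum_congr rfl fun i hi => ?_
      rw [(Finset.mem_filter.1 hi).2]
    have h2 : ∑ u, (addOrderOf (Q' u) - m u) • Q' u = - ∑ u, m u • Q' u := by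
      rw [← Finset.sum_neg_distrib]
      refine Finset.sum_congr rfl fun u _ => ?_
      rw [eq_neg_iff_add_eq_zero, ← add_nsmul, Nat.sub_add_cancel (hm u),
        addOrderOf_nsmul_eq_zero]
    rw [h1, h2, ← sub_eq_add_neg]
    exact hX0
end
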